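/- For each integer k ≥ 0 let b_k > 0 be such that the sequence (2^k b_k) is decreasing and super-exponentially converges to 0, set t_k = 4^{−k}, and let f_k ∈ C^∞([−t_k, t_k]) satisfy f_k'' > 0, f_k(0) = 0 = f_k'(0), and sup over k and x of |f_k^{(r)}(x)| < ∞ for each integer r ≥ 0. Then there exist K > 0 and f ∈ C^∞(ℝ) such that: (a) the restriction of f to [0, 3t_K] equals the sum of a series that is pliable at 0; (b) f' and f'' are positive on (0, 3t_K] and f^{(r)}(0) = 0 for all r ≥ 0; (c) f'(x) = b_k f_k'(x − t_k) + b_k for all k ≥ K and all x with |x − t_k| < t_{k+1}. -/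

import Mathlib

open Set Filter Topology

noncomputable section

/-- The `C^r` norm `‖f‖_{C^r(J)} = ∑_{i=0}^{r} max_J |f^{(i)}|` of a function on a set
`J ⊆ ℝ` (derivatives taken within `J`). -/
def CrNorm (r : ℕ) (f : ℝ → ℝ) (J : Set ℝ) : ℝ :=
  ∑ i ∈ Finset.range (r + 1), ⨆ x : J, |iteratedDerivWithin i f J (x : ℝ)|

/-- The support of `g` relative to the interval `[a,b]`: the closure of the set of points
of `[a,b]` where `g` is nonzero. -/
def suppOn (a b : ℝ) (g : ℝ → ℝ) : Set ℝ :=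
  closure {x | x ∈ Set.Icc a b ∧ g x ≠ 0}

/-- The data `(k₀, cs, g)` is a series witnessing that `f` is pliable at the endpoint `c`
of the interval `[a,b]`:
* `f = Σ_{k ≥ k₀} cs k • g k` pointwise on `[a,b]`;
* the `cs k` are positive and super-exponentially converge to `0`;
* the `g k` are `C^∞` on `[a,b]`, their supports form a locally finite family of compact
  subsets of `[a,b] ∖ {c}`, and for every `r` the `C^r` norms of `g k` grow at most
  exponentially in `k`;
* there is `L > 0` such that whenever `0 < 2ε < b - a`, the set `J_ε` of indices `k ≥ k₀`
  whose support meets `{x ∈ [a,b] : ε ≤ |x - c| ≤ 2ε}` has at most `L` elements, and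
  `2^{-kL} ≤ ε` for every `k ∈ J_ε`. -/
structure IsPliableSeries (a b c : ℝ) (f : ℝ → ℝ) (k₀ : ℤ) (cs : ℤ → ℝ)
    (g : ℤ → ℝ → ℝ) : Prop where
  sum_eq : ∀ x ∈ Set.Icc a b,
    HasSum (fun k : {k : ℤ // k₀ ≤ k} => cs k.val * g k.val x) (f x)
  cs_pos : ∀ k : ℤ, k₀ ≤ k → 0 < cs k
  cs_superexp : ∀ γ : ℝ,
    Tendsto (fun k : ℤ => (2 : ℝ) ^ (γ * (k : ℝ)) * cs k) atTop (𝓝 0)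
  g_smooth : ∀ k : ℤ, k₀ ≤ k → ContDiffOn ℝ (⊤ : ℕ∞) (g k) (Set.Icc a b)
  supp_compact : ∀ k : ℤ, k₀ ≤ k → IsCompact (suppOn a b (g k))
  supp_subset : ∀ k : ℤ, k₀ ≤ k → suppOn a b (g k) ⊆ Set.Icc a b \ {c}
  supp_locFin : ∀ x ∈ Set.Icc a b \ {c}, ∃ U ∈ 𝓝 x,
    {k : ℤ | k₀ ≤ k ∧ (suppOn a b (g k) ∩ U).Nonempty}.Finite
  norm_growth : ∀ r : ℕ, ∃ γ M : ℝ, ∀ k : ℤ, k₀ ≤ k →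
    (2 : ℝ) ^ (γ * (k : ℝ)) * CrNorm r (g k) (Set.Icc a b) ≤ M
  index_bound : ∃ L : ℕ, 0 < L ∧ ∀ ε : ℝ, 0 < ε → 2 * ε < b - a →
    {k : ℤ | k₀ ≤ k ∧ (suppOn a b (g k) ∩
      {x ∈ Set.Icc a b | ε ≤ |x - c| ∧ |x - c| ≤ 2 * ε}).Nonempty}.Finite ∧
    {k : ℤ | k₀ ≤ k ∧ (suppOn a b (g k) ∩
      {x ∈ Set.Icc a b | ε ≤ |x - c| ∧ |x - c| ≤ 2 * ε}).Nonempty}.ncard ≤ L ∧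
    ∀ k : ℤ, k₀ ≤ k →
      (suppOn a b (g k) ∩ {x ∈ Set.Icc a b | ε ≤ |x - c| ∧ |x - c| ≤ 2 * ε}).Nonempty →
      (2 : ℝ) ^ (-(k : ℝ) * (L : ℝ)) ≤ ε

/-- `f` is pliable at the endpoint `c` of `[a,b]`. -/
def Pliable (a b c : ℝ) (f : ℝ → ℝ) : Prop :=
  ∃ (k₀ : ℤ) (cs : ℤ → ℝ) (g : ℤ → ℝ → ℝ), IsPliableSeries a b c f k₀ cs g

/-- `t_k = 4^{-k}`. -/
def tAux (k : ℕ) : ℝ := ((4 : ℝ) ^ k)⁻¹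

/-!
The derivative `f'` is obtained by patching the prescribed pieces `φ k x = b k f_k'(x - t_k) + b k`
with a partition of unity at the scales `4 ^ (-k)`, built from rescalings of one increasing ramp.
For large `k` the piece `φ k` is within `b k / 4` of `b k`, and `b (k + 1) ≤ b k / 2`, so
`φ (k + 1) ≤ φ k` where consecutive pieces overlap; moving from one to the other along the ramp thus
keeps `f'` increasing. Super-exponential decay of `b k` absorbs the factors `4 ^ (n k)` produced by
differentiating the cutoffs, which makes `f` smooth and flat at `0`. Pliability then holds for every
smooth function that is flat at `0`: cut it with the same partition of unity, and take as
coefficients a positive super-exponentially decaying sequence that majorizes, up to constants, all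
its derivatives at scale `4 ^ (-k)` simultaneously.
-/

open scoped ContDiff

lemma tAux_pos (k : ℕ) : 0 < tAux k := by unfold tAux; positivity

lemma tAux_le_one (k : ℕ) : tAux k ≤ 1 := inv_le_one_of_one_le₀ (one_le_pow₀ (by norm_num))

lemma tAux_succ (k : ℕ) : tAux (k + 1) = tAux k / 4 := by
  rw [tAux, tAux, pow_succ, mul_inv, div_eq_mul_inv]

lemma tendsto_tAux : Tendsto tAux atTop (𝓝 0) :=
  tendsto_inv_atTop_zero.comp (tendsto_pow_atTop_atTop_of_one_lt (by norm_num))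

lemma tAux_pow (k n : ℕ) : tAux k ^ n = ((4 : ℝ) ^ (n * k))⁻¹ := by
  rw [tAux, inv_pow, ← pow_mul, mul_comm k]

lemma four_pow_mul_le_iff {k : ℕ} {x a : ℝ} : 4 ^ k * x ≤ a ↔ x ≤ a * tAux k := by
  rw [tAux, ← div_eq_mul_inv, le_div_iff₀' (by positivity)]

lemma four_pow_mul_lt_iff {k : ℕ} {x a : ℝ} : 4 ^ k * x < a ↔ x < a * tAux k := by
  rw [tAux, ← div_eq_mul_inv, lt_div_iff₀' (by positivity)]

lemma lt_four_pow_mul_iff {k : ℕ} {x a : ℝ} : a < 4 ^ k * x ↔ a * tAux k < x := by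
  rw [tAux, ← div_eq_mul_inv, div_lt_iff₀' (by positivity)]

/-! ### Super-exponential decay -/

/-- Super-exponential convergence to `0` of a sequence indexed by `ℕ`. -/
def SuperexpDecay (c : ℕ → ℝ) : Prop :=
  ∀ γ : ℝ, Tendsto (fun k : ℕ => (2 : ℝ) ^ (γ * (k : ℝ)) * c k) atTop (𝓝 0)

lemma two_rpow_two_mul_mul (n k : ℕ) : (2 : ℝ) ^ ((2 * n : ℝ) * k) = 4 ^ (n * k) := by
  rw [Real.rpow_mul two_pos.le, Real.rpow_mul two_pos.le, Real.rpow_natCast, Real.rpow_natCast,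
    pow_mul]
  norm_num

lemma superexpDecay_iff {c : ℕ → ℝ} :
    SuperexpDecay c ↔ ∀ n : ℕ, ∃ D : ℝ, ∀ k, |c k| ≤ D * tAux k ^ n := by
  simp only [tAux_pow]
  refine ⟨fun hc n => ?_, fun hc γ => ?_⟩
  · obtain ⟨D, hD⟩ := (hc (2 * n)).abs.bddAbove_range
    refine ⟨D, fun k => ?_⟩
    have hk : |(2 : ℝ) ^ ((2 * n : ℝ) * k) * c k| ≤ D := hD (mem_range_self k)
    rw [two_rpow_two_mul_mul, abs_mul, abs_of_pos (by positivity)] at hk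
    rwa [← div_eq_mul_inv, le_div_iff₀' (by positivity)]
  · obtain ⟨n, hn⟩ := exists_nat_gt γ
    obtain ⟨D, hD⟩ := hc n
    have hlt : (2 : ℝ) ^ (γ - 2 * n) < 1 :=
      Real.rpow_lt_one_of_one_lt_of_neg one_lt_two (by linarith [n.cast_nonneg (α := ℝ)])
    have hgeom := (tendsto_pow_atTop_nhds_zero_of_lt_one (by positivity) hlt).const_mul D
    rw [mul_zero] at hgeom
    refine squeeze_zero_norm (fun k => ?_) hgeom
    calc ‖(2 : ℝ) ^ (γ * k) * c k‖ = 2 ^ (γ * k) * |c k| := by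
          rw [norm_mul, Real.norm_eq_abs, Real.norm_eq_abs, abs_of_pos (by positivity)]
      _ ≤ 2 ^ (γ * k) * (D * ((4 : ℝ) ^ (n * k))⁻¹) := by gcongr; exact hD k
      _ = D * (2 ^ (γ - 2 * n)) ^ k := by
          rw [← two_rpow_two_mul_mul, ← Real.rpow_natCast, ← Real.rpow_mul two_pos.le, sub_mul,
            Real.rpow_sub two_pos]
          ring

namespace SuperexpDecay

variable {c : ℕ → ℝ}

lemma two_rpow_mul (hc : SuperexpDecay c) (δ : ℝ) :
    SuperexpDecay fun k => (2 : ℝ) ^ (δ * (k : ℝ)) * c k := fun γ =>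
  (hc (γ + δ)).congr fun k => by rw [add_mul, Real.rpow_add two_pos, mul_assoc]

lemma of_two_pow_mul (hc : SuperexpDecay fun k => (2 : ℝ) ^ k * c k) : SuperexpDecay c := by
  convert hc.two_rpow_mul (-1) using 2 with k
  rw [neg_one_mul, Real.rpow_neg two_pos.le, Real.rpow_natCast,
    inv_mul_cancel_left₀ (by positivity)]

lemma four_pow_mul (hc : SuperexpDecay c) (n : ℕ) :
    SuperexpDecay fun k => (4 : ℝ) ^ (n * k) * c k := by
  simpa only [two_rpow_two_mul_mul] using hc.two_rpow_mul (2 * n)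

lemma summable (hc : SuperexpDecay c) : Summable c := by
  obtain ⟨D, hD⟩ := superexpDecay_iff.1 hc 1
  refine Summable.of_norm_bounded (g := fun k : ℕ => D * (1 / 4) ^ k)
    ((summable_geometric_of_lt_one (by norm_num) (by norm_num)).mul_left D) fun k => ?_
  simpa [tAux] using hD k

lemma tendsto_int (hc : SuperexpDecay c) (γ : ℝ) :
    Tendsto (fun k : ℤ => (2 : ℝ) ^ (γ * (k : ℝ)) * c (k - 1).toNat) atTop (𝓝 0) := by
  have hindex : Tendsto (fun k : ℤ => (k - 1).toNat) atTop atTop :=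
    tendsto_atTop.2 fun n => (eventually_ge_atTop (n + 1 : ℤ)).mono fun k hk => by omega
  have hlim := ((hc γ).comp hindex).const_mul ((2 : ℝ) ^ γ)
  rw [mul_zero] at hlim
  refine hlim.congr' ((eventually_ge_atTop 1).mono fun k hk => ?_)
  obtain ⟨n, rfl⟩ := Int.le.dest hk
  simp only [Function.comp_apply, add_sub_cancel_left, Int.toNat_natCast]
  rw [← mul_assoc, ← Real.rpow_add two_pos]
  push_cast
  ring_nf

end SuperexpDecay

lemma inv_four_pow_sq_le_mul_tAux_pow {D : ℝ} {n : ℕ} (hD : (4 : ℝ) ^ (n * n) ≤ D) (k : ℕ) :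
    ((4 : ℝ) ^ (k * k))⁻¹ ≤ D * tAux k ^ n := by
  have hexp : n * k ≤ n * n + k * k := by
    nlinarith [mul_self_nonneg ((n : ℤ) - k), le_total n k]
  rw [tAux_pow, ← div_eq_mul_inv, inv_eq_one_div, div_le_div_iff₀ (by positivity) (by positivity),
    one_mul]
  calc (4 : ℝ) ^ (n * k) ≤ 4 ^ (n * n + k * k) := pow_le_pow_right₀ (by norm_num) hexp
    _ = 4 ^ (n * n) * 4 ^ (k * k) := pow_add ..
    _ ≤ D * 4 ^ (k * k) := by gcongr

-- The majorant is `⨅ n, D n * 4 ^ (-n * k)`, where `D n` bounds the decay of the first `n`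
-- sequences at rate `4 ^ (-n * k)`; taking `4 ^ (n * n) ≤ D n` keeps the infimum positive.
theorem exists_superexpDecay_majorant {M : ℕ → ℕ → ℝ} (hM : ∀ r, SuperexpDecay (M r)) :
    ∃ c : ℕ → ℝ, (∀ k, 0 < c k) ∧ SuperexpDecay c ∧ ∀ r, ∃ A : ℝ, ∀ k, |M r k| ≤ A * c k := by
  choose C hC using fun r => superexpDecay_iff.1 (hM r)
  let D : ℕ → ℝ := fun n => 4 ^ (n * n) + ∑ r ∈ Finset.range (n + 1), |C r n|
  have hDpow (n : ℕ) : (4 : ℝ) ^ (n * n) ≤ D n := le_add_of_nonneg_right (by positivity)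
  have hD1 (n : ℕ) : 1 ≤ D n := (one_le_pow₀ (by norm_num)).trans (hDpow n)
  have hD0 (n : ℕ) : 0 < D n := zero_lt_one.trans_le (hD1 n)
  have htn (n k : ℕ) : 0 < tAux k ^ n := pow_pos (tAux_pos k) n
  have hMD {r n : ℕ} (hrn : r ≤ n) (k : ℕ) : |M r k| ≤ D n * tAux k ^ n := by
    refine (hC r n k).trans (mul_le_mul_of_nonneg_right ?_ (htn n k).le)
    calc C r n ≤ |C r n| := le_abs_self _
      _ ≤ ∑ r ∈ Finset.range (n + 1), |C r n| :=
        Finset.single_le_sum (f := fun r => |C r n|) (fun r _ => abs_nonneg _)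
          (Finset.mem_range.2 (Nat.lt_succ_of_le hrn))
      _ ≤ D n := le_add_of_nonneg_left (by positivity)
  let c : ℕ → ℝ := fun k => ⨅ n, D n * tAux k ^ n
  have hcpos (k : ℕ) : 0 < c k :=
    (show (0 : ℝ) < ((4 : ℝ) ^ (k * k))⁻¹ by positivity).trans_le
      (le_ciInf fun n => inv_four_pow_sq_le_mul_tAux_pow (hDpow n) k)
  have hcle (n k : ℕ) : c k ≤ D n * tAux k ^ n :=
    ciInf_le ⟨0, by rintro _ ⟨m, rfl⟩; exact (mul_pos (hD0 m) (htn m k)).le⟩ n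
  refine ⟨c, hcpos, superexpDecay_iff.2 fun n => ⟨D n, fun k => ?_⟩, fun r => ⟨D r, fun k => ?_⟩⟩
  · simpa only [abs_of_pos (hcpos k)] using hcle n k
  · rw [← div_le_iff₀' (hD0 r)]
    refine le_ciInf fun n => (div_le_iff₀' (hD0 r)).2 ?_
    rcases le_total r n with hrn | hnr
    · exact (hMD hrn k).trans (le_mul_of_one_le_left (mul_pos (hD0 n) (htn n k)).le (hD1 r))
    · refine (hMD le_rfl k).trans (mul_le_mul_of_nonneg_left ?_ (hD0 r).le)
      exact (pow_le_pow_of_le_one (tAux_pos k).le (tAux_le_one k) hnr).trans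
        (le_mul_of_one_le_left (htn n k).le (hD1 n))

/-! ### Flat functions -/

/-- All derivatives of `f` vanish at `a`; meant for smooth `f`, since `iteratedDeriv` takes the
junk value `0` where derivatives do not exist. -/
def IsFlatAt (f : ℝ → ℝ) (a : ℝ) : Prop := ∀ r, iteratedDeriv r f a = 0

lemma isFlatAt_of_eq_zero {f : ℝ → ℝ} {s : Set ℝ} {a : ℝ} (hf : ContDiff ℝ ∞ f)
    (hfs : ∀ x ∈ s, f x = 0) (ha : a ∈ closure (interior s)) : IsFlatAt f a := fun r => by
  have hclosed : IsClosed {x | iteratedDeriv r f x = 0} :=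
    isClosed_eq (hf.continuous_iteratedDeriv r (by exact_mod_cast le_top)) continuous_const
  refine hclosed.closure_subset_iff.2 (fun x hx => ?_) ha
  have hfx : f =ᶠ[𝓝 x] fun _ => (0 : ℝ) := by
    filter_upwards [mem_interior_iff_mem_nhds.1 hx] with z hz using hfs z hz
  simp [hfx.iteratedDeriv_eq]

namespace IsFlatAt

variable {f : ℝ → ℝ} {a : ℝ}

protected lemma iteratedDeriv (hflat : IsFlatAt f a) (r : ℕ) :
    IsFlatAt (iteratedDeriv r f) a := fun i => by
  have h := hflat (i + r)
  rw [iteratedDeriv_eq_iterate, Function.iterate_add_apply] at h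
  rwa [iteratedDeriv_eq_iterate, iteratedDeriv_eq_iterate]

lemma exists_abs_le_mul_pow (hflat : IsFlatAt f a) (hf : ContDiff ℝ ∞ f) {b : ℝ} (hab : a < b)
    (n : ℕ) : ∃ C : ℝ, ∀ x ∈ Icc a b, |f x| ≤ C * (x - a) ^ (n + 1) := by
  obtain ⟨C, hC⟩ := exists_taylor_mean_remainder_bound (n := n) hab.le
    (hf.of_le (by exact_mod_cast le_top)).contDiffOn
  have htaylor (x : ℝ) : taylorWithinEval f n (Icc a b) a x = 0 := by
    rw [taylor_within_apply]
    refine Finset.sum_eq_zero fun i _ => ?_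
    rw [iteratedDerivWithin_eq_iteratedDeriv (uniqueDiffOn_Icc hab)
      (hf.of_le (by exact_mod_cast le_top)).contDiffAt (left_mem_Icc.2 hab.le), hflat i, smul_zero]
  exact ⟨C, fun x hx => by simpa only [htaylor, sub_zero, Real.norm_eq_abs] using hC x hx⟩

lemma superexpDecay_iSup (hflat : IsFlatAt f 0) (hf : ContDiff ℝ ∞ f) {R : ℝ} (hR : 0 < R) :
    SuperexpDecay fun k => ⨆ x : Icc 0 (R * tAux k), |f x| := by
  refine superexpDecay_iff.2 fun n => ?_
  obtain ⟨C, hC⟩ := hflat.exists_abs_le_mul_pow hf hR n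
  refine ⟨|C| * R ^ (n + 1), fun k => ?_⟩
  have ht := tAux_pos k
  rw [abs_of_nonneg (Real.iSup_nonneg fun x => abs_nonneg _)]
  refine Real.iSup_le (fun ⟨x, hx0, hxR⟩ => ?_) (by positivity)
  calc |f x| ≤ C * (x - 0) ^ (n + 1) :=
        hC x ⟨hx0, hxR.trans (mul_le_of_le_one_right hR.le (tAux_le_one k))⟩
    _ ≤ |C| * (R * tAux k) ^ (n + 1) := by rw [sub_zero]; gcongr; exact le_abs_self C
    _ = |C| * R ^ (n + 1) * (tAux k ^ n * tAux k) := by ring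
    _ ≤ |C| * R ^ (n + 1) * tAux k ^ n := by
        gcongr; exact mul_le_of_le_one_right (by positivity) (tAux_le_one k)

theorem exists_superexpDecay_bound (hflat : IsFlatAt f 0) (hf : ContDiff ℝ ∞ f) {R : ℝ}
    (hR : 0 < R) : ∃ c : ℕ → ℝ, (∀ k, 0 < c k) ∧ SuperexpDecay c ∧
      ∀ r, ∃ A : ℝ, ∀ k, ∀ x ∈ Icc 0 (R * tAux k), |iteratedDeriv r f x| ≤ A * c k := by
  have hderiv (r : ℕ) : ContDiff ℝ ∞ (iteratedDeriv r f) := by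
    rw [iteratedDeriv_eq_iterate]; exact hf.iterate_deriv r
  obtain ⟨c, hcpos, hc, hbound⟩ := exists_superexpDecay_majorant fun r =>
    (hflat.iteratedDeriv r).superexpDecay_iSup (hderiv r) hR
  refine ⟨c, hcpos, hc, fun r => (hbound r).imp fun A hA k x hx => ?_⟩
  have hbdd := isCompact_Icc.bddAbove_image (K := Icc 0 (R * tAux k))
    (hderiv r).continuous.abs.continuousOn
  rw [image_eq_range] at hbdd
  exact (le_ciSup hbdd ⟨x, hx⟩).trans ((le_abs_self _).trans (hA k))

end IsFlatAt

/-! ### Cutoffs at scale `4 ^ (-k)` -/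

/-- The localization of `u` to the scale `4 ^ (-k)` by means of the profile `η`. -/
def scaledCutoff (η : ℝ → ℝ) (k : ℕ) (u : ℝ → ℝ) (x : ℝ) : ℝ := η (4 ^ k * x) * u x

section scaledCutoff

variable {η : ℝ → ℝ}

lemma scaledCutoff_eventuallyEq_zero {k : ℕ} {x : ℝ} (hx : 4 ^ k * x ∉ tsupport η) (u : ℝ → ℝ) :
    scaledCutoff η k u =ᶠ[𝓝 x] fun _ => (0 : ℝ) := by
  have hcont : Tendsto (fun z : ℝ => 4 ^ k * z) (𝓝 x) (𝓝 (4 ^ k * x)) :=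
    (continuous_const_mul _).tendsto x
  filter_upwards [hcont.eventually (notMem_tsupport_iff_eventuallyEq.1 hx)] with z hz
  simp [scaledCutoff, hz]

lemma contDiff_scaledCutoff (hη : ContDiff ℝ ∞ η) {k : ℕ} {u : ℝ → ℝ}
    (hu : ∀ x, 4 ^ k * x ∈ tsupport η → ContDiffAt ℝ ∞ u x) :
    ContDiff ℝ ∞ (scaledCutoff η k u) := by
  refine contDiff_iff_contDiffAt.2 fun x => ?_
  by_cases hx : 4 ^ k * x ∈ tsupport η
  · exact (hη.comp (contDiff_const.mul contDiff_id)).contDiffAt.mul (hu x hx)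
  · exact contDiffAt_const.congr_of_eventuallyEq (scaledCutoff_eventuallyEq_zero hx u)

lemma exists_abs_iteratedDeriv_le (hη : ContDiff ℝ ∞ η) (hη' : HasCompactSupport η) (n : ℕ) :
    ∃ B : ℝ, ∀ y, |iteratedDeriv n η y| ≤ B := by
  obtain ⟨B, hB⟩ := (hη'.iteratedFDeriv (𝕜 := ℝ) n).exists_bound_of_continuous
    (hη.continuous_iteratedFDeriv (by exact_mod_cast le_top))
  refine ⟨B, fun y => ?_⟩
  simpa only [norm_iteratedFDeriv_eq_norm_iteratedDeriv, Real.norm_eq_abs] using hB y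

lemma abs_iteratedDeriv_scaledCutoff_le (hη : ContDiff ℝ ∞ η) {u : ℝ → ℝ} {n k : ℕ} {x : ℝ}
    {B A : ℕ → ℝ} (hB : ∀ i y, |iteratedDeriv i η y| ≤ B i) (hu : ContDiffAt ℝ ∞ u x)
    (hA : ∀ i ≤ n, |iteratedDeriv i u x| ≤ A i) :
    |iteratedDeriv n (scaledCutoff η k u) x| ≤
      (∑ i ∈ Finset.range (n + 1), n.choose i * B i * A (n - i)) * 4 ^ (n * k) := by
  have hscaled : ContDiff ℝ ∞ fun x => η (4 ^ k * x) := hη.comp (contDiff_const.mul contDiff_id)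
  change |iteratedDeriv n ((fun x => η (4 ^ k * x)) * u) x| ≤ _
  rw [iteratedDeriv_mul (hscaled.of_le (by exact_mod_cast le_top)).contDiffAt
    (hu.of_le (by exact_mod_cast le_top)), Finset.sum_mul]
  refine (Finset.abs_sum_le_sum_abs _ _).trans (Finset.sum_le_sum fun i hi => ?_)
  have hin : i ≤ n := Finset.mem_range_succ_iff.1 hi
  have hBi := (abs_nonneg _).trans (hB i 0)
  have hpow : ((4 : ℝ) ^ k) ^ i ≤ 4 ^ (n * k) := by
    rw [← pow_mul, mul_comm]
    exact pow_le_pow_right₀ (by norm_num) (Nat.mul_le_mul_right k hin)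
  rw [iteratedDeriv_comp_const_mul (hη.of_le (by exact_mod_cast le_top)), abs_mul, abs_mul, abs_mul,
    Nat.abs_cast, abs_of_nonneg (by positivity : (0 : ℝ) ≤ (4 ^ k) ^ i)]
  calc (n.choose i : ℝ) * ((4 ^ k) ^ i * |iteratedDeriv i η (4 ^ k * x)|) *
        |iteratedDeriv (n - i) u x|
      ≤ (n.choose i : ℝ) * (4 ^ (n * k) * B i) * A (n - i) := by
        gcongr
        exacts [hB i _, hA _ (Nat.sub_le n i)]
    _ = n.choose i * B i * A (n - i) * 4 ^ (n * k) := by ring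

variable {u : ℕ → ℝ → ℝ} {b : ℕ → ℝ}

lemma exists_abs_iteratedDeriv_scaledCutoff_le (hη : ContDiff ℝ ∞ η) (hη' : HasCompactSupport η)
    (hb : ∀ k, 0 ≤ b k) (hu : ∀ k x, 4 ^ k * x ∈ tsupport η → ContDiffAt ℝ ∞ (u k) x)
    (hub : ∀ i, ∃ A : ℝ, ∀ k x, 4 ^ k * x ∈ tsupport η → |iteratedDeriv i (u k) x| ≤ A * b k)
    (n : ℕ) : ∃ A : ℝ, ∀ k x,
      |iteratedDeriv n (scaledCutoff η k (u k)) x| ≤ A * (4 ^ (n * k) * b k) := by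
  choose B hB using exists_abs_iteratedDeriv_le hη hη'
  choose A hA using hub
  have hB0 (i : ℕ) : 0 ≤ B i := (abs_nonneg _).trans (hB i 0)
  refine ⟨∑ i ∈ Finset.range (n + 1), n.choose i * B i * |A (n - i)|, fun k x => ?_⟩
  by_cases hx : 4 ^ k * x ∈ tsupport η
  · have hAb : ∀ i ≤ n, |iteratedDeriv i (u k) x| ≤ |A i| * b k := fun i _ =>
      (hA i k x hx).trans (mul_le_mul_of_nonneg_right (le_abs_self _) (hb k))
    refine (abs_iteratedDeriv_scaledCutoff_le hη hB (hu k x hx) hAb).trans_eq ?_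
    simp only [← mul_assoc, ← Finset.sum_mul]
    ring
  · rw [(scaledCutoff_eventuallyEq_zero hx (u k)).iteratedDeriv_eq, iteratedDeriv_fun_const_zero,
      abs_zero]
    exact mul_nonneg (Finset.sum_nonneg fun i _ => mul_nonneg
      (mul_nonneg (Nat.cast_nonneg _) (hB0 i)) (abs_nonneg _)) (mul_nonneg (by positivity) (hb k))

theorem contDiff_tsum_scaledCutoff (hη : ContDiff ℝ ∞ η) (hη' : HasCompactSupport η)
    (hb : ∀ k, 0 ≤ b k) (hbdecay : SuperexpDecay b)
    (hu : ∀ k x, 4 ^ k * x ∈ tsupport η → ContDiffAt ℝ ∞ (u k) x)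
    (hub : ∀ i, ∃ A : ℝ, ∀ k x, 4 ^ k * x ∈ tsupport η → |iteratedDeriv i (u k) x| ≤ A * b k) :
    ContDiff ℝ ∞ fun x => ∑' k, scaledCutoff η k (u k) x := by
  choose A hA using exists_abs_iteratedDeriv_scaledCutoff_le hη hη' hb hu hub
  refine contDiff_tsum (N := ⊤) (fun k => contDiff_scaledCutoff hη (hu k))
    (fun n _ => (hbdecay.four_pow_mul n).summable.mul_left (A n)) fun n k x _ => ?_
  rw [norm_iteratedFDeriv_eq_norm_iteratedDeriv, Real.norm_eq_abs]
  exact hA n k x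

end scaledCutoff

/-! ### A partition of unity subordinate to the scales `4 ^ (-k)` -/

/-- A smooth increasing step, equal to `0` on `(-∞, 3/8]` and to `1` on `[7/16, ∞)`. -/
def ramp (y : ℝ) : ℝ := Real.smoothTransition (16 * y - 6)

/-- The profile of the partition of unity: the functions `x ↦ bump (4 ^ k * x)` are supported at
scale `4 ^ (-k)`, and their telescoping sum is `1` on `(0, 3/2]`. -/
def bump (y : ℝ) : ℝ := ramp y - ramp (y / 4)

lemma ramp_eq_zero {y : ℝ} (hy : y ≤ 3 / 8) : ramp y = 0 :=
  Real.smoothTransition.zero_of_nonpos (by linarith)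

lemma ramp_eq_one {y : ℝ} (hy : 7 / 16 ≤ y) : ramp y = 1 :=
  Real.smoothTransition.one_of_one_le (by linarith)

lemma ramp_mem_Icc (y : ℝ) : ramp y ∈ Icc 0 1 :=
  ⟨Real.smoothTransition.nonneg _, Real.smoothTransition.le_one _⟩

lemma monotone_ramp : Monotone ramp := fun _ _ h => Real.smoothTransition.monotone (by linarith)

lemma contDiff_ramp : ContDiff ℝ ∞ ramp :=
  Real.smoothTransition.contDiff.comp ((contDiff_const.mul contDiff_id).sub contDiff_const)

lemma contDiff_bump : ContDiff ℝ ∞ bump :=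
  contDiff_ramp.sub (contDiff_ramp.comp (contDiff_id.div_const 4))

lemma bump_eq_zero_of_le {y : ℝ} (hy : y ≤ 3 / 8) : bump y = 0 := by
  have hy4 : y / 4 ≤ 3 / 8 := by linarith
  rw [bump, ramp_eq_zero hy, ramp_eq_zero hy4, sub_zero]

lemma bump_eq_zero_of_ge {y : ℝ} (hy : 7 / 4 ≤ y) : bump y = 0 := by
  rw [bump, ramp_eq_one (by linarith), ramp_eq_one (by linarith), sub_self]

lemma tsupport_bump_subset : tsupport bump ⊆ Icc (3 / 8) (7 / 4) :=
  closure_minimal (fun _ hy => ⟨le_of_not_ge fun h => hy (bump_eq_zero_of_le h),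
    le_of_not_ge fun h => hy (bump_eq_zero_of_ge h)⟩) isClosed_Icc

lemma hasCompactSupport_bump : HasCompactSupport bump :=
  isCompact_Icc.of_isClosed_subset (isClosed_tsupport _) tsupport_bump_subset

lemma bump_pow_mul_eq_zero {j k : ℕ} {x : ℝ} (hx : 4 ^ k * x ∈ Icc (7 / 64) (3 / 2)) (hjk : j ≠ k)
    (hjk' : j ≠ k + 1) : bump (4 ^ j * x) = 0 := by
  have hx0 : 0 < x := pos_of_mul_pos_right (a := 4 ^ k) (by linarith [hx.1]) (by positivity)
  rcases hjk.lt_or_gt with hlt | hgt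
  · refine bump_eq_zero_of_le ?_
    have hstep : (4 : ℝ) ^ (j + 1) * x ≤ 4 ^ k * x := by gcongr <;> grind
    rw [pow_succ] at hstep
    linarith [hx.2]
  · refine bump_eq_zero_of_ge ?_
    have hstep : (4 : ℝ) ^ (k + 2) * x ≤ 4 ^ j * x := by gcongr <;> grind
    rw [pow_add] at hstep
    linarith [hx.1]

theorem hasSum_scaledCutoff_bump (φ : ℕ → ℝ → ℝ) {k : ℕ} {x : ℝ}
    (hx : 4 ^ k * x ∈ Icc (7 / 64) (3 / 2)) :
    HasSum (fun j => scaledCutoff bump j (φ j) x)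
      (ramp (4 ^ k * x) * φ k x + (1 - ramp (4 ^ k * x)) * φ (k + 1) x) := by
  have hk : bump (4 ^ k * x) = ramp (4 ^ k * x) := by
    rw [bump, ramp_eq_zero (y := _ / 4) (by linarith [hx.2]), sub_zero]
  have hk' : bump (4 ^ (k + 1) * x) = 1 - ramp (4 ^ k * x) := by
    have hquarter : 4 ^ (k + 1) * x / 4 = 4 ^ k * x := by ring
    rw [bump, hquarter, ramp_eq_one (by rw [pow_succ]; linarith [hx.1])]
  have hsum := hasSum_sum_of_ne_finset_zero (s := {k, k + 1}) (L := .unconditional ℕ)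
    (f := fun j => scaledCutoff bump j (φ j) x) fun j hj => by
      simp only [Finset.mem_insert, Finset.mem_singleton, not_or] at hj
      rw [scaledCutoff, bump_pow_mul_eq_zero hx hj.1 hj.2, zero_mul]
  rwa [Finset.sum_pair k.succ_ne_self.symm, scaledCutoff, scaledCutoff, hk, hk'] at hsum

lemma exists_pow_mul_mem_Ioc {q a x : ℝ} {N : ℕ} (hq : 1 < q) (hx : 0 < x) (hxa : q ^ N * x ≤ a) :
    ∃ k ≥ N, q ^ k * x ∈ Ioc (a / q) a := by
  have hq0 : 0 < q := zero_lt_one.trans hq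
  have hy : 0 < q ^ N * x := by positivity
  obtain ⟨n, hn, hn'⟩ := exists_nat_pow_near ((one_le_div hy).2 hxa) hq
  rw [le_div_iff₀ hy] at hn
  rw [div_lt_iff₀ hy] at hn'
  refine ⟨N + n, N.le_add_right n, (div_lt_iff₀ hq0).2 (hn'.trans_eq ?_), hn.trans_eq' ?_⟩ <;> ring

lemma hasSum_bump {x : ℝ} (hx : 0 < x) (hx' : x ≤ 3 / 2) :
    HasSum (fun k : ℕ => bump (4 ^ k * x)) 1 := by
  obtain ⟨k, -, hk, hk'⟩ :=
    exists_pow_mul_mem_Ioc (q := 4) (N := 0) (by norm_num) hx (by simpa using hx')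
  have hsum := hasSum_scaledCutoff_bump (fun _ _ => 1) (k := k) (x := x) ⟨by linarith, hk'⟩
  simpa only [scaledCutoff, mul_one, add_sub_cancel] using hsum

/-! ### Pliability of flat functions -/

/-- The interval `[α * 4 ^ (-k), β * 4 ^ (-k)]` of points at scale `4 ^ (-k)`. -/
def annulus (α β : ℝ) (k : ℕ) : Set ℝ := {x | 4 ^ k * x ∈ Icc α β}

lemma isClosed_annulus (α β : ℝ) (k : ℕ) : IsClosed (annulus α β k) :=
  isClosed_Icc.preimage (continuous_const_mul _)

lemma pos_of_mem_annulus {α β x : ℝ} {k : ℕ} (hα : 0 < α) (hx : x ∈ annulus α β k) : 0 < x :=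
  pos_of_mul_pos_right (hα.trans_le hx.1) (by positivity)

lemma suppOn_subset_inter {a b : ℝ} {g : ℝ → ℝ} {S : Set ℝ} (hS : IsClosed S)
    (hg : Function.support g ⊆ S) : suppOn a b g ⊆ Icc a b ∩ S :=
  closure_minimal (fun _ hx => ⟨hx.1, hg hx.2⟩) (isClosed_Icc.inter hS)

lemma isCompact_suppOn (a b : ℝ) (g : ℝ → ℝ) : IsCompact (suppOn a b g) :=
  isCompact_Icc.of_isClosed_subset isClosed_closure
    (closure_minimal (fun _ hx => hx.1) isClosed_Icc)

lemma finite_setOf_pow_mul_le {q δ : ℝ} (hq : 1 < q) (hδ : 0 < δ) (β : ℝ) :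
    {n : ℕ | q ^ n * δ ≤ β}.Finite := by
  have hlarge := ((tendsto_pow_atTop_atTop_of_one_lt hq).atTop_mul_const hδ).eventually_gt_atTop β
  rw [← Nat.cofinite_eq_atTop] at hlarge
  simpa only [eventually_cofinite, not_lt] using hlarge

lemma encard_le_of_forall_lt_add {s : Set ℕ} {p : ℕ} (hs : ∀ m ∈ s, ∀ n ∈ s, n < m + p) :
    s.encard ≤ p := by
  rcases s.eq_empty_or_nonempty with rfl | hne
  · simp
  · have hsub : s ⊆ Finset.Ico (sInf s) (sInf s + p) := fun n hn =>
      Finset.mem_coe.2 (Finset.mem_Ico.2 ⟨Nat.sInf_le hn, hs _ (Nat.sInf_mem hne) n hn⟩)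
    refine (encard_le_encard hsub).trans_eq ?_
    rw [encard_coe_eq_coe_finsetCard, Nat.card_Ico, Nat.add_sub_cancel_left]

lemma exists_encard_setOf_pow_mul_mem_Icc_le {q α : ℝ} (hq : 1 < q) (hα : 0 < α) (β : ℝ) :
    ∃ p : ℕ, ∀ x : ℝ, {n : ℕ | q ^ n * x ∈ Icc α β}.encard ≤ p := by
  obtain ⟨p, hp⟩ := pow_unbounded_of_one_lt (β / α) hq
  refine ⟨p, fun x => encard_le_of_forall_lt_add fun m hm n hn => ?_⟩
  have hpow (i : ℕ) : 0 ≤ q ^ i := pow_nonneg (zero_le_one.trans hq.le) i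
  have hx : 0 < x := pos_of_mul_pos_right (hα.trans_le hm.1) (hpow m)
  refine (pow_lt_pow_iff_right₀ hq).1 (lt_of_mul_lt_mul_right ?_ hx.le)
  calc q ^ n * x ≤ β := hn.2
    _ < q ^ p * α := (div_lt_iff₀ hα).1 hp
    _ ≤ q ^ p * (q ^ m * x) := mul_le_mul_of_nonneg_left hm.1 (hpow p)
    _ = q ^ (m + p) * x := by ring

lemma exists_crNorm_Icc_le {g : ℕ → ℝ → ℝ} {a b : ℝ} (hab : a < b) (hg : ∀ n, ContDiff ℝ ∞ (g n))
    (hbound : ∀ r, ∃ M : ℝ, ∀ n x, |iteratedDeriv r (g n) x| ≤ M * 4 ^ (r * n)) (r : ℕ) :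
    ∃ M, 0 ≤ M ∧ ∀ n, CrNorm r (g n) (Icc a b) ≤ M * 4 ^ (r * n) := by
  choose M hM using hbound
  refine ⟨∑ i ∈ Finset.range (r + 1), |M i|, by positivity, fun n => ?_⟩
  rw [CrNorm, Finset.sum_mul]
  refine Finset.sum_le_sum fun i hi => Real.iSup_le (fun x => ?_) (by positivity)
  rw [iteratedDerivWithin_eq_iteratedDeriv (uniqueDiffOn_Icc hab)
    ((hg n).of_le (by exact_mod_cast le_top)).contDiffAt x.2]
  calc |iteratedDeriv i (g n) x| ≤ M i * 4 ^ (i * n) := hM i n x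
    _ ≤ |M i| * 4 ^ (r * n) := by
      gcongr
      exacts [le_abs_self _, by norm_num, Finset.mem_range_succ_iff.1 hi]

section Criterion

variable {g : ℕ → ℝ → ℝ} {α β T : ℝ}

lemma mem_Icc_of_suppOn_inter_nonempty {ε : ℝ} {n : ℕ}
    (hsupp : Function.support (g n) ⊆ annulus α β n)
    (hne : (suppOn 0 T (g n) ∩ {x ∈ Icc 0 T | ε ≤ |x - 0| ∧ |x - 0| ≤ 2 * ε}).Nonempty) :
    4 ^ n * ε ∈ Icc (α / 2) β := by
  obtain ⟨x, hx, ⟨hx0, -⟩, hεx, hxε⟩ := hne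
  obtain ⟨-, hαx, hxβ⟩ := suppOn_subset_inter (isClosed_annulus α β n) hsupp hx
  rw [sub_zero, abs_of_nonneg hx0] at hεx hxε
  refine ⟨?_, hxβ.trans' (by gcongr)⟩
  have hscaled : (4 : ℝ) ^ n * x ≤ 4 ^ n * (2 * ε) := by gcongr
  linarith

lemma finite_setOf_suppOn_inter_Ioi_nonempty {δ : ℝ} (hδ : 0 < δ)
    (hsupp : ∀ n, Function.support (g n) ⊆ annulus α β n) :
    {n : ℕ | (suppOn 0 T (g n) ∩ Ioi δ).Nonempty}.Finite := by
  refine (finite_setOf_pow_mul_le (q := 4) (by norm_num) hδ β).subset ?_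
  rintro n ⟨x, hx, hδx : δ < x⟩
  have hxβ := (suppOn_subset_inter (isClosed_annulus α β n) (hsupp n) hx).2.2
  exact hxβ.trans' (by gcongr)

lemma two_rpow_neg_le {ε : ℝ} {n q L : ℕ} (hα : (2 : ℝ)⁻¹ ^ q ≤ α) (hε : α ≤ 4 ^ n * ε)
    (hL : q + 2 ≤ L) : (2 : ℝ) ^ (-((n + 1 : ℕ) : ℝ) * (L : ℝ)) ≤ ε := by
  have hexp : q + 2 * n ≤ (n + 1) * L := by nlinarith
  calc (2 : ℝ) ^ (-((n + 1 : ℕ) : ℝ) * (L : ℝ)) = 2⁻¹ ^ ((n + 1) * L) := by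
        rw [neg_mul, Real.rpow_neg two_pos.le, inv_pow, ← Nat.cast_mul, Real.rpow_natCast]
    _ ≤ 2⁻¹ ^ (q + 2 * n) := pow_le_pow_of_le_one (by norm_num) (by norm_num) hexp
    _ = 2⁻¹ ^ q * (4 ^ n)⁻¹ := by rw [pow_add, pow_mul, ← inv_pow]; norm_num
    _ ≤ 4 ^ n * ε * (4 ^ n)⁻¹ := by gcongr; exact hα.trans hε
    _ = ε := by field_simp

lemma setOf_one_le_eq_image (P : ℕ → Prop) :
    {k : ℤ | 1 ≤ k ∧ P (k - 1).toNat} = (fun n : ℕ => ((n + 1 : ℕ) : ℤ)) '' {n | P n} := by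
  ext k
  refine ⟨fun ⟨hk, hP⟩ => ⟨(k - 1).toNat, hP, by grind⟩, ?_⟩
  rintro ⟨n, hn, rfl⟩
  simpa using hn

lemma hasSum_one_le_iff {u : ℕ → ℝ} {s : ℝ} :
    HasSum (fun k : {k : ℤ // 1 ≤ k} => u (k.val - 1).toNat) s ↔ HasSum u s := by
  let e : ℕ ≃ {k : ℤ // 1 ≤ k} :=
    { toFun := fun n => ⟨n + 1, by omega⟩
      invFun := fun k => (k.val - 1).toNat
      left_inv := fun n => by simp
      right_inv := fun k => Subtype.ext (by grind) }
  exact e.symm.hasSum_iff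

lemma exists_suppOn_index_bound (hα : 0 < α)
    (hsupp : ∀ n, Function.support (g n) ⊆ annulus α β n) :
    ∃ L : ℕ, 0 < L ∧ ∀ ε : ℝ,
      {n : ℕ | (suppOn 0 T (g n) ∩
        {x ∈ Icc 0 T | ε ≤ |x - 0| ∧ |x - 0| ≤ 2 * ε}).Nonempty}.encard ≤ L ∧
      ∀ n, (suppOn 0 T (g n) ∩ {x ∈ Icc 0 T | ε ≤ |x - 0| ∧ |x - 0| ≤ 2 * ε}).Nonempty →
        (2 : ℝ) ^ (-((n + 1 : ℕ) : ℝ) * (L : ℝ)) ≤ ε := by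
  obtain ⟨p, hp⟩ :=
    exists_encard_setOf_pow_mul_mem_Icc_le (q := 4) (by norm_num) (half_pos hα) β
  obtain ⟨q, hq⟩ := exists_pow_lt_of_lt_one (half_pos hα) (by norm_num : (2 : ℝ)⁻¹ < 1)
  refine ⟨p + (q + 2), by omega, fun ε => ⟨?_, fun n hn => ?_⟩⟩
  · calc _ ≤ {n : ℕ | 4 ^ n * ε ∈ Icc (α / 2) β}.encard :=
          encard_le_encard fun n hn => mem_Icc_of_suppOn_inter_nonempty (hsupp n) hn
      _ ≤ p := hp ε
      _ ≤ (p + (q + 2) : ℕ) := by exact_mod_cast Nat.le_add_right p (q + 2)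
  · exact two_rpow_neg_le hq.le (mem_Icc_of_suppOn_inter_nonempty (hsupp n) hn).1
      (Nat.le_add_left _ p)

-- The `n`-th term is placed at the index `n + 1`, because `2 ^ (-k * L) ≤ ε` cannot be achieved by
-- enlarging `L` when `k = 0`.
theorem pliable_of_annular_series {f : ℝ → ℝ} {c : ℕ → ℝ} (hT : 0 < T) (hα : 0 < α)
    (hsum : ∀ x ∈ Icc 0 T, HasSum (fun n => c n * g n x) (f x)) (hcpos : ∀ n, 0 < c n)
    (hc : SuperexpDecay c) (hg : ∀ n, ContDiff ℝ ∞ (g n))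
    (hsupp : ∀ n, Function.support (g n) ⊆ annulus α β n)
    (hbound : ∀ r, ∃ M : ℝ, ∀ n x, |iteratedDeriv r (g n) x| ≤ M * 4 ^ (r * n)) :
    Pliable 0 T 0 f := by
  refine ⟨1, fun k => c (k - 1).toNat, fun k => g (k - 1).toNat,
    fun x hx => (hasSum_one_le_iff (u := fun n => c n * g n x)).2 (hsum x hx),
    fun k _ => hcpos _, hc.tendsto_int,
    fun k _ => (hg _).contDiffOn, fun k _ => isCompact_suppOn _ _ _, fun k _ x hx => ?_,
    fun x hx => ?_, fun r => ?_, ?_⟩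
  · obtain ⟨hxT, hxα⟩ := suppOn_subset_inter (isClosed_annulus _ _ _) (hsupp _) hx
    exact ⟨hxT, (pos_of_mem_annulus hα hxα).ne'⟩
  · have hx0 : 0 < x := lt_of_le_of_ne hx.1.1 (Ne.symm hx.2)
    refine ⟨Ioi (x / 2), Ioi_mem_nhds (half_lt_self hx0), ?_⟩
    rw [setOf_one_le_eq_image fun n => (suppOn 0 T (g n) ∩ Ioi (x / 2)).Nonempty]
    exact (finite_setOf_suppOn_inter_Ioi_nonempty (half_pos hx0) hsupp).image _
  · obtain ⟨M, hM0, hM⟩ := exists_crNorm_Icc_le hT hg hbound r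
    refine ⟨-(2 * r), M, fun k hk => ?_⟩
    obtain ⟨n, rfl⟩ : ∃ n : ℕ, ((n + 1 : ℕ) : ℤ) = k := ⟨(k - 1).toNat, by omega⟩
    have hn : (((n + 1 : ℕ) : ℤ) - 1).toNat = n := by simp
    rw [hn, Int.cast_natCast, neg_mul, Real.rpow_neg two_pos.le, two_rpow_two_mul_mul,
      inv_mul_le_iff₀' (by positivity)]
    refine (hM n).trans ?_
    gcongr <;> grind
  · obtain ⟨L, hL, hindex⟩ := exists_suppOn_index_bound (T := T) hα hsupp
    refine ⟨L, hL, fun ε _ _ => ?_⟩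
    obtain ⟨hcard, hpow⟩ := hindex ε
    rw [setOf_one_le_eq_image fun n => (suppOn 0 T (g n) ∩
      {x ∈ Icc 0 T | ε ≤ |x - 0| ∧ |x - 0| ≤ 2 * ε}).Nonempty]
    have hcard' := (encard_image_le (fun n : ℕ => ((n + 1 : ℕ) : ℤ)) _).trans hcard
    refine ⟨finite_of_encard_le_coe hcard', ENat.toNat_le_of_le_natCast hcard', fun k hk hne => ?_⟩
    obtain ⟨n, rfl⟩ : ∃ n : ℕ, ((n + 1 : ℕ) : ℤ) = k := ⟨(k - 1).toNat, by omega⟩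
    exact_mod_cast hpow n (by simpa using hne)

end Criterion

lemma tsupport_bump_div_subset {T : ℝ} (hT : 0 < T) :
    tsupport (fun y => bump (y / T)) ⊆ Icc (3 / 8 * T) (7 / 4 * T) := by
  refine closure_minimal (fun y hy => ?_) isClosed_Icc
  obtain ⟨hlow, hhigh⟩ := tsupport_bump_subset (subset_tsupport bump hy)
  exact ⟨(le_div_iff₀ hT).1 hlow, (div_le_iff₀ hT).1 hhigh⟩

lemma hasSum_bump_div_mul {f : ℝ → ℝ} {T x : ℝ} (hf0 : f 0 = 0) (hT : 0 < T) (hx : x ∈ Icc 0 T) :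
    HasSum (fun n : ℕ => bump (4 ^ n * (x / T)) * f x) (f x) := by
  rcases hx.1.eq_or_lt with rfl | hx0
  · simpa only [hf0, mul_zero] using hasSum_zero
  · have hxT : x / T ≤ 3 / 2 := ((div_le_one hT).2 hx.2).trans (by norm_num)
    simpa only [one_mul] using (hasSum_bump (div_pos hx0 hT) hxT).mul_right (f x)

theorem IsFlatAt.pliable {f : ℝ → ℝ} {T : ℝ} (hflat : IsFlatAt f 0) (hf : ContDiff ℝ ∞ f)
    (hT : 0 < T) : Pliable 0 T 0 f := by
  let η : ℝ → ℝ := fun y => bump (y / T)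
  have hη : ContDiff ℝ ∞ η := contDiff_bump.comp (contDiff_id.div_const T)
  have hηsupp : tsupport η ⊆ Icc (3 / 8 * T) (7 / 4 * T) := tsupport_bump_div_subset hT
  have hηcompact : HasCompactSupport η :=
    isCompact_Icc.of_isClosed_subset (isClosed_tsupport _) hηsupp
  obtain ⟨c, hcpos, hc, hbound⟩ :=
    hflat.exists_superexpDecay_bound hf (R := 7 / 4 * T) (by positivity)
  have hsupp (n : ℕ) (u : ℝ → ℝ) :
      Function.support (scaledCutoff η n u) ⊆ annulus (3 / 8 * T) (7 / 4 * T) n := fun x hx =>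
    hηsupp (subset_tsupport η (left_ne_zero_of_mul hx))
  have hsmooth (n : ℕ) : ContDiff ℝ ∞ fun x => (c n)⁻¹ * f x := contDiff_const.mul hf
  refine pliable_of_annular_series (g := fun n => scaledCutoff η n fun x => (c n)⁻¹ * f x)
    hT (by positivity) (fun x hx => ?_) hcpos hc
    (fun n => contDiff_scaledCutoff hη fun x _ => (hsmooth n).contDiffAt)
    (fun n => hsupp n _) fun r => ?_
  · have hterm (n : ℕ) : c n * scaledCutoff η n (fun x => (c n)⁻¹ * f x) x =
        bump (4 ^ n * (x / T)) * f x := by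
      have := (hcpos n).ne'
      simp only [scaledCutoff, η, mul_div_assoc]
      field_simp
    simp only [hterm]
    exact hasSum_bump_div_mul (by simpa using hflat 0) hT hx
  · have hpiece (i : ℕ) : ∃ A : ℝ, ∀ n x, 4 ^ n * x ∈ tsupport η →
        |iteratedDeriv i (fun x => (c n)⁻¹ * f x) x| ≤ A * 1 := by
      refine (hbound i).imp fun A hA n x hx => ?_
      have hx0 : 0 < x := pos_of_mem_annulus (by positivity) (hηsupp hx)
      rw [iteratedDeriv_const_mul_field, abs_mul, abs_of_pos (inv_pos.2 (hcpos n)), mul_one,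
        inv_mul_le_iff₀' (hcpos n)]
      exact hA n x ⟨hx0.le, four_pow_mul_le_iff.1 (hηsupp hx).2⟩
    simpa only [mul_one] using exists_abs_iteratedDeriv_scaledCutoff_le hη hηcompact
      (fun _ => zero_le_one) (fun n x _ => (hsmooth n).contDiffAt) hpiece r

/-! ### Patching functions along the scales -/

/-- The superposition of the functions `φ k`, each used at scale `4 ^ (-k)`. -/
def patch (φ : ℕ → ℝ → ℝ) (x : ℝ) : ℝ := ∑' k, scaledCutoff bump k (φ k) x

section patch

variable {φ : ℕ → ℝ → ℝ} {k : ℕ} {x : ℝ}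

lemma patch_eq (hx : 4 ^ k * x ∈ Icc (7 / 64) (3 / 2)) :
    patch φ x = ramp (4 ^ k * x) * φ k x + (1 - ramp (4 ^ k * x)) * φ (k + 1) x :=
  (hasSum_scaledCutoff_bump φ hx).tsum_eq

lemma patch_eq_self (hx : 4 ^ k * x ∈ Icc (7 / 16) (3 / 2)) : patch φ x = φ k x := by
  rw [patch_eq ⟨by linarith [hx.1], hx.2⟩, ramp_eq_one hx.1]
  ring

lemma patch_of_nonpos (hx : x ≤ 0) : patch φ x = 0 := by
  have hterm (j : ℕ) : scaledCutoff bump j (φ j) x = 0 := by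
    have hneg : 4 ^ j * x ≤ 0 := mul_nonpos_of_nonneg_of_nonpos (by positivity) hx
    rw [scaledCutoff, bump_eq_zero_of_le (by linarith), zero_mul]
  simp only [patch, hterm, tsum_zero]

lemma convex_comb_pos {θ u v : ℝ} (hθ : θ ∈ Icc 0 1) (hu : 0 < u) (hv : 0 < v) :
    0 < θ * u + (1 - θ) * v :=
  convex_Ioi (0 : ℝ) hu hv hθ.1 (sub_nonneg.2 hθ.2) (add_sub_cancel θ 1)

lemma deriv_convex_comb_pos {θ u v : ℝ → ℝ} {u' v' : ℝ} (hθ : DifferentiableAt ℝ θ x)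
    (hθ' : 0 ≤ deriv θ x) (hθx : θ x ∈ Icc 0 1) (hu : HasDerivAt u u' x) (hv : HasDerivAt v v' x)
    (hu' : 0 < u') (hv' : 0 < v') (hvu : v x ≤ u x) :
    0 < deriv (fun z => θ z * u z + (1 - θ z) * v z) x := by
  have hderiv : deriv (fun z => θ z * u z + (1 - θ z) * v z) x =
      deriv θ x * (u x - v x) + (θ x * u' + (1 - θ x) * v') := by
    rw [((hθ.hasDerivAt.fun_mul hu).fun_add ((hθ.hasDerivAt.const_sub 1).fun_mul hv)).deriv]
    ring
  rw [hderiv]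
  exact add_pos_of_nonneg_of_pos (mul_nonneg hθ' (sub_nonneg.2 hvu))
    (convex_comb_pos hθx hu' hv')

lemma patch_pos (hx : 4 ^ k * x ∈ Icc (7 / 64) (3 / 2)) (hk : 0 < φ k x)
    (hk' : 0 < φ (k + 1) x) : 0 < patch φ x := by
  rw [patch_eq hx]
  exact convex_comb_pos (ramp_mem_Icc _) hk hk'

theorem deriv_patch_pos {d d' : ℝ} (hx : 4 ^ k * x ∈ Ioo (7 / 64) (3 / 2))
    (hk : HasDerivAt (φ k) d x) (hk' : HasDerivAt (φ (k + 1)) d' x) (hd : 0 < d) (hd' : 0 < d')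
    (hle : φ (k + 1) x ≤ φ k x) : 0 < deriv (patch φ) x := by
  have hscale : Continuous fun z : ℝ => 4 ^ k * z := continuous_const_mul _
  have hpatch : patch φ =ᶠ[𝓝 x] fun z =>
      ramp (4 ^ k * z) * φ k z + (1 - ramp (4 ^ k * z)) * φ (k + 1) z := by
    filter_upwards [(isOpen_Ioo.preimage hscale).mem_nhds hx] with z hz
    exact patch_eq (Ioo_subset_Icc_self hz)
  have hmono : Monotone fun z : ℝ => ramp (4 ^ k * z) :=
    monotone_ramp.comp (monotone_mul_left_of_nonneg (by positivity))
  have hdiff : Differentiable ℝ fun z : ℝ => ramp (4 ^ k * z) :=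
    (contDiff_ramp.differentiable (by simp)).comp (differentiable_id.const_mul _)
  rw [hpatch.deriv_eq]
  exact deriv_convex_comb_pos (hdiff x) hmono.deriv_nonneg (ramp_mem_Icc _) hk hk' hd hd' hle

end patch

/-! ### The pieces -/

section derivWithin

variable {f : ℝ → ℝ} {s : Set ℝ} {y : ℝ}

lemma contDiffAt_derivWithin (hf : ContDiffOn ℝ ∞ f s) (hs : UniqueDiffOn ℝ s) (hy : s ∈ 𝓝 y) :
    ContDiffAt ℝ ∞ (derivWithin f s) y :=
  (hf.derivWithin hs (by exact_mod_cast le_top)).contDiffAt hy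

lemma iteratedDeriv_derivWithin (hf : ContDiffOn ℝ ∞ f s) (hs : UniqueDiffOn ℝ s) (hy : s ∈ 𝓝 y)
    (i : ℕ) : iteratedDeriv i (derivWithin f s) y = iteratedDerivWithin (i + 1) f s y := by
  rw [iteratedDerivWithin_succ', iteratedDerivWithin_eq_iteratedDeriv hs
    ((contDiffAt_derivWithin hf hs hy).of_le (by exact_mod_cast le_top)) (mem_of_mem_nhds hy)]

lemma hasDerivAt_derivWithin (hf : ContDiffOn ℝ ∞ f s) (hs : UniqueDiffOn ℝ s) (hy : s ∈ 𝓝 y) :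
    HasDerivAt (derivWithin f s) (iteratedDerivWithin 2 f s y) y := by
  rw [← iteratedDeriv_derivWithin hf hs hy 1, iteratedDeriv_one]
  exact ((contDiffAt_derivWithin hf hs hy).differentiableAt (by simp)).hasDerivAt

end derivWithin

/-- The prescribed derivative `β f'(x - t) + β` near `t`, for `f` defined on `[-t, t]`. -/
def piece (β t : ℝ) (f : ℝ → ℝ) (x : ℝ) : ℝ := β * derivWithin f (Icc (-t) t) (x - t) + β

section piece

variable {β t x : ℝ} {f : ℝ → ℝ}

lemma uniqueDiffOn_Icc_neg (hx : x ∈ Ioo 0 (2 * t)) : UniqueDiffOn ℝ (Icc (-t) t) :=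
  uniqueDiffOn_Icc (by linarith [hx.1, hx.2])

lemma Icc_neg_mem_nhds_sub (hx : x ∈ Ioo 0 (2 * t)) : Icc (-t) t ∈ 𝓝 (x - t) :=
  Icc_mem_nhds (by linarith [hx.1]) (by linarith [hx.2])

lemma contDiffAt_derivWithin_sub (hf : ContDiffOn ℝ ∞ f (Icc (-t) t)) (hx : x ∈ Ioo 0 (2 * t)) :
    ContDiffAt ℝ ∞ (fun z => derivWithin f (Icc (-t) t) (z - t)) x :=
  (contDiffAt_derivWithin hf (uniqueDiffOn_Icc_neg hx) (Icc_neg_mem_nhds_sub hx)).comp x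
    (contDiffAt_id.sub contDiffAt_const)

lemma contDiffAt_piece (hf : ContDiffOn ℝ ∞ f (Icc (-t) t)) (hx : x ∈ Ioo 0 (2 * t)) :
    ContDiffAt ℝ ∞ (piece β t f) x :=
  (contDiffAt_const.mul (contDiffAt_derivWithin_sub hf hx)).add contDiffAt_const

lemma hasDerivAt_piece (hf : ContDiffOn ℝ ∞ f (Icc (-t) t)) (hx : x ∈ Ioo 0 (2 * t)) :
    HasDerivAt (piece β t f) (β * iteratedDerivWithin 2 f (Icc (-t) t) (x - t)) x :=
  (((hasDerivAt_derivWithin hf (uniqueDiffOn_Icc_neg hx)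
    (Icc_neg_mem_nhds_sub hx)).comp_sub_const x t).const_mul β).add_const β

lemma abs_iteratedDeriv_piece_le {M : ℝ} {i : ℕ} (hf : ContDiffOn ℝ ∞ f (Icc (-t) t))
    (hx : x ∈ Ioo 0 (2 * t)) (hβ : 0 ≤ β)
    (hM : |iteratedDerivWithin (i + 1) f (Icc (-t) t) (x - t)| ≤ M) :
    |iteratedDeriv i (piece β t f) x| ≤ (M + 1) * β := by
  rw [← iteratedDeriv_derivWithin hf (uniqueDiffOn_Icc_neg hx) (Icc_neg_mem_nhds_sub hx)] at hM
  have hconst : |iteratedDeriv i (fun _ : ℝ => β) x| ≤ β := by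
    rw [iteratedDeriv_const]
    split_ifs <;> simp [abs_of_nonneg hβ, hβ]
  have hsum : iteratedDeriv i (piece β t f) x =
      β * iteratedDeriv i (derivWithin f (Icc (-t) t)) (x - t) +
        iteratedDeriv i (fun _ => β) x := by
    have hsmooth := (contDiffAt_derivWithin_sub hf hx).of_le (m := i) (by exact_mod_cast le_top)
    have hadd := iteratedDeriv_fun_add (contDiffAt_const (c := β) |>.mul hsmooth)
      (contDiffAt_const (c := β))
    rwa [iteratedDeriv_const_mul_field, iteratedDeriv_comp_sub_const] at hadd
  calc |iteratedDeriv i (piece β t f) x|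
      ≤ |β * iteratedDeriv i (derivWithin f (Icc (-t) t)) (x - t)| +
        |iteratedDeriv i (fun _ => β) x| := hsum ▸ abs_add_le _ _
    _ ≤ β * M + β := by rw [abs_mul, abs_of_nonneg hβ]; gcongr
    _ = (M + 1) * β := by ring

lemma abs_piece_sub_le {M : ℝ} (hf : ContDiffOn ℝ ∞ f (Icc (-t) t))
    (hf0 : derivWithin f (Icc (-t) t) 0 = 0) (hx : x ∈ Ioo 0 (2 * t)) (hβ : 0 ≤ β)
    (hM : ∀ y ∈ Icc (-t) t, |iteratedDerivWithin 2 f (Icc (-t) t) y| ≤ M) :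
    |piece β t f x - β| ≤ β * (M * t) := by
  have ht : t ∈ Ioo 0 (2 * t) := ⟨by linarith [hx.1, hx.2], by linarith [hx.1, hx.2]⟩
  have hM0 : 0 ≤ M := (abs_nonneg _).trans (hM t ⟨by linarith [ht.1], le_rfl⟩)
  have hpiece_t : piece β t f t = β := by rw [piece, sub_self, hf0, mul_zero, zero_add]
  have hmvt := (convex_Ioo 0 (2 * t)).norm_image_sub_le_of_norm_hasDerivWithin_le
    (fun z hz => (hasDerivAt_piece (β := β) hf hz).hasDerivWithinAt) (C := β * M) (fun z hz => by
      rw [norm_mul, Real.norm_of_nonneg hβ]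
      exact mul_le_mul_of_nonneg_left (hM _ (mem_of_mem_nhds (Icc_neg_mem_nhds_sub hz))) hβ) ht hx
  rw [hpiece_t, Real.norm_eq_abs, Real.norm_eq_abs, mul_assoc] at hmvt
  refine hmvt.trans ?_
  gcongr
  exact abs_le.2 ⟨by linarith [hx.1], by linarith [hx.2]⟩

end piece

lemma mem_Ioo_two_mul_tAux {k : ℕ} {x : ℝ} (hx : 4 ^ k * x ∈ Ioo 0 2) :
    x ∈ Ioo 0 (2 * tAux k) :=
  ⟨pos_of_mul_pos_right hx.1 (by positivity), four_pow_mul_lt_iff.1 hx.2⟩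

section patchPiece

variable {b : ℕ → ℝ} {fs : ℕ → ℝ → ℝ}

lemma contDiff_patch_piece (hb : ∀ k, 0 ≤ b k) (hbdecay : SuperexpDecay b)
    (hfs : ∀ k, ContDiffOn ℝ ∞ (fs k) (Icc (-tAux k) (tAux k)))
    (hbound : ∀ r : ℕ, ∃ M : ℝ, ∀ k, ∀ x ∈ Icc (-tAux k) (tAux k),
      |iteratedDerivWithin r (fs k) (Icc (-tAux k) (tAux k)) x| ≤ M) :
    ContDiff ℝ ∞ (patch fun k => piece (b k) (tAux k) (fs k)) := by
  have hdomain (k : ℕ) (x : ℝ) (hx : 4 ^ k * x ∈ tsupport bump) : x ∈ Ioo 0 (2 * tAux k) := by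
    obtain ⟨hlow, hhigh⟩ := tsupport_bump_subset hx
    exact mem_Ioo_two_mul_tAux ⟨by linarith, by linarith⟩
  refine contDiff_tsum_scaledCutoff contDiff_bump hasCompactSupport_bump hb hbdecay
    (fun k x hx => contDiffAt_piece (hfs k) (hdomain k x hx)) fun i => ?_
  obtain ⟨M, hM⟩ := hbound (i + 1)
  exact ⟨M + 1, fun k x hx => abs_iteratedDeriv_piece_le (hfs k) (hdomain k x hx) (hb k)
    (hM k _ (mem_of_mem_nhds (Icc_neg_mem_nhds_sub (hdomain k x hx))))⟩

lemma eventually_abs_piece_sub_le {M δ : ℝ} (hδ : 0 < δ) (hb : ∀ k, 0 ≤ b k)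
    (hfs : ∀ k, ContDiffOn ℝ ∞ (fs k) (Icc (-tAux k) (tAux k)))
    (hfs0 : ∀ k, derivWithin (fs k) (Icc (-tAux k) (tAux k)) 0 = 0)
    (hM : ∀ k, ∀ x ∈ Icc (-tAux k) (tAux k),
      |iteratedDerivWithin 2 (fs k) (Icc (-tAux k) (tAux k)) x| ≤ M) :
    ∀ᶠ k in atTop, ∀ x ∈ Ioo 0 (2 * tAux k),
      |piece (b k) (tAux k) (fs k) x - b k| ≤ b k * δ := by
  have htAux : Tendsto (fun k => M * tAux k) atTop (𝓝 0) := by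
    simpa only [mul_zero] using tendsto_tAux.const_mul M
  filter_upwards [htAux.eventually_le_const hδ] with k hk x hx
  exact (abs_piece_sub_le (hfs k) (hfs0 k) hx (hb k) (hM k)).trans
    (mul_le_mul_of_nonneg_left hk (hb k))

-- Consecutive pieces `φ (k + 1)` and `φ k` are ordered where they overlap:
-- `φ (k + 1) ≤ 5/4 * b (k + 1) ≤ 5/8 * b k ≤ 3/4 * b k ≤ φ k`.
theorem patch_piece_pos_and_deriv_pos {N : ℕ} {x : ℝ} (hb : ∀ k, 0 < b k)
    (hbhalf : ∀ k, b (k + 1) ≤ b k / 2)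
    (hfs : ∀ k, ContDiffOn ℝ ∞ (fs k) (Icc (-tAux k) (tAux k)))
    (hfs'' : ∀ k, ∀ y ∈ Icc (-tAux k) (tAux k),
      0 < iteratedDerivWithin 2 (fs k) (Icc (-tAux k) (tAux k)) y)
    (hclose : ∀ k ≥ N, ∀ y ∈ Ioo 0 (2 * tAux k),
      |piece (b k) (tAux k) (fs k) y - b k| ≤ b k * (1 / 4))
    (hx : 0 < x) (hxN : 4 ^ N * x ≤ 7 / 16) :
    0 < patch (fun k => piece (b k) (tAux k) (fs k)) x ∧
      0 < deriv (patch fun k => piece (b k) (tAux k) (fs k)) x := by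
  obtain ⟨k, hNk, hlow, hhigh⟩ := exists_pow_mul_mem_Ioc (q := 4) (by norm_num) hx hxN
  have hk : x ∈ Ioo 0 (2 * tAux k) := mem_Ioo_two_mul_tAux ⟨by linarith, by linarith⟩
  have hk' : x ∈ Ioo 0 (2 * tAux (k + 1)) :=
    mem_Ioo_two_mul_tAux (by rw [pow_succ]; constructor <;> linarith)
  have hφ := abs_le.1 (hclose k hNk x hk)
  have hφ' := abs_le.1 (hclose (k + 1) (by omega) x hk')
  have hbk := hb k
  have hbk' := hb (k + 1)
  refine ⟨patch_pos (k := k) ⟨by linarith, by linarith⟩ (by linarith) (by linarith), ?_⟩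
  exact deriv_patch_pos (k := k) ⟨by linarith, by linarith⟩ (hasDerivAt_piece (hfs k) hk)
    (hasDerivAt_piece (hfs (k + 1)) hk')
    (mul_pos hbk (hfs'' k _ (mem_of_mem_nhds (Icc_neg_mem_nhds_sub hk))))
    (mul_pos hbk' (hfs'' (k + 1) _ (mem_of_mem_nhds (Icc_neg_mem_nhds_sub hk'))))
    (by linarith [hbhalf k])

end patchPiece

lemma exists_contDiff_primitive {h : ℝ → ℝ} (hh : ContDiff ℝ ∞ h) (h0 : ∀ x ≤ 0, h x = 0) :
    ∃ f : ℝ → ℝ, ContDiff ℝ ∞ f ∧ deriv f = h ∧ ∀ x ≤ 0, f x = 0 := by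
  have hprim (x : ℝ) : HasDerivAt (fun z => ∫ t in (0 : ℝ)..z, h t) (h x) x :=
    intervalIntegral.integral_hasDerivAt_right (hh.continuous.intervalIntegrable _ _)
      (hh.continuous.stronglyMeasurableAtFilter _ _) hh.continuous.continuousAt
  have hderiv : deriv (fun z => ∫ t in (0 : ℝ)..z, h t) = h := funext fun x => (hprim x).deriv
  refine ⟨_, contDiff_infty_iff_deriv.2 ⟨fun x => (hprim x).differentiableAt, by rwa [hderiv]⟩,
    hderiv, fun x hx => ?_⟩
  rw [intervalIntegral.integral_congr (g := fun _ => 0) fun t ht =>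
    h0 t (uIcc_of_ge hx ▸ ht).2, intervalIntegral.integral_zero]

lemma four_pow_mul_mem_of_abs_sub_lt {k : ℕ} {x : ℝ} (hx : |x - tAux k| < tAux (k + 1)) :
    4 ^ k * x ∈ Icc (7 / 16) (3 / 2) := by
  rw [tAux_succ, abs_lt] at hx
  exact ⟨(lt_four_pow_mul_iff.2 (by linarith [tAux_pos k])).le,
    four_pow_mul_le_iff.2 (by linarith [tAux_pos k])⟩

/-- Boman's patching lemma (Lemma A.1 of the paper). Given positive `b_k`
with `(2^k b_k)` decreasing and super-exponentially converging to `0`, `t_k = 4^{-k}`,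
and `f_k ∈ C^∞([-t_k, t_k])` with `f_k'' > 0`, `f_k(0) = 0 = f_k'(0)` and all derivatives
bounded uniformly in `k` and `x`, there are `K > 0` and `f ∈ C^∞(ℝ)` such that:
(a) the restriction of `f` to `[0, 3 t_K]` is the sum of a series pliable at `0`;
(b) `f' > 0` and `f'' > 0` on `(0, 3 t_K]`, and `f^{(r)}(0) = 0` for all `r`;
(c) `f'(x) = b_k f_k'(x - t_k) + b_k` whenever `k ≥ K` and `|x - t_k| < t_{k+1}`. -/
theorem stmt17 (b : ℕ → ℝ) (hbpos : ∀ k, 0 < b k)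
    (hbdec : ∀ k : ℕ, (2 : ℝ) ^ (k + 1) * b (k + 1) ≤ (2 : ℝ) ^ k * b k)
    (hbsup : ∀ γ : ℝ,
      Tendsto (fun k : ℕ => (2 : ℝ) ^ (γ * (k : ℝ)) * ((2 : ℝ) ^ k * b k)) atTop (𝓝 0))
    (fs : ℕ → ℝ → ℝ)
    (hfsm : ∀ k, ContDiffOn ℝ (⊤ : ℕ∞) (fs k) (Set.Icc (-tAux k) (tAux k)))
    (hf'' : ∀ k, ∀ x ∈ Set.Icc (-tAux k) (tAux k),
      0 < iteratedDerivWithin 2 (fs k) (Set.Icc (-tAux k) (tAux k)) x)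
    (hf0 : ∀ k, fs k 0 = 0)
    (hf'0 : ∀ k, derivWithin (fs k) (Set.Icc (-tAux k) (tAux k)) 0 = 0)
    (hbnd : ∀ r : ℕ, ∃ M : ℝ, ∀ k, ∀ x ∈ Set.Icc (-tAux k) (tAux k),
      |iteratedDerivWithin r (fs k) (Set.Icc (-tAux k) (tAux k)) x| ≤ M) :
    ∃ K : ℕ, 0 < K ∧ ∃ f : ℝ → ℝ, ContDiff ℝ (⊤ : ℕ∞) f ∧
      -- (a)
      Pliable 0 (3 * tAux K) 0 f ∧
      -- (b)
      (∀ x ∈ Set.Ioc 0 (3 * tAux K), 0 < deriv f x ∧ 0 < iteratedDeriv 2 f x) ∧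
      (∀ r : ℕ, iteratedDeriv r f 0 = 0) ∧
      -- (c)
      (∀ k : ℕ, K ≤ k → ∀ x : ℝ, |x - tAux k| < tAux (k + 1) →
        deriv f x =
          b k * derivWithin (fs k) (Set.Icc (-tAux k) (tAux k)) (x - tAux k) + b k) := by
  have hbhalf (k : ℕ) : b (k + 1) ≤ b k / 2 := by
    have hpow : (0 : ℝ) < 2 ^ k := by positivity
    rw [le_div_iff₀' two_pos]
    exact le_of_mul_le_mul_left (by simpa only [pow_succ, mul_assoc] using hbdec k) hpow
  have hb0 (k : ℕ) : 0 ≤ b k := (hbpos k).le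
  obtain ⟨M, hM⟩ := hbnd 2
  obtain ⟨N, hN⟩ := eventually_atTop.1
    (eventually_abs_piece_sub_le (by norm_num : (0 : ℝ) < 1 / 4) hb0 hfsm hf'0 hM)
  obtain ⟨f, hf, hderiv, hfneg⟩ := exists_contDiff_primitive
    (contDiff_patch_piece hb0 (SuperexpDecay.of_two_pow_mul hbsup) hfsm hbnd)
    fun _ => patch_of_nonpos
  have hflat : IsFlatAt f 0 := isFlatAt_of_eq_zero (s := Iic 0) hf hfneg (by simp)
  refine ⟨N + 2, by omega, f, hf, hflat.pliable hf (mul_pos three_pos (tAux_pos _)),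
    fun x hx => ?_, hflat, fun k _ x hx => ?_⟩
  · rw [iteratedDeriv_succ, iteratedDeriv_one, hderiv]
    have hxN : 4 ^ N * x ≤ 7 / 16 := by
      have hx3 := four_pow_mul_le_iff.2 hx.2
      rw [pow_add] at hx3
      linarith
    exact patch_piece_pos_and_deriv_pos hbpos hbhalf hfsm hf'' hN hx.1 hxN
  · rw [hderiv]
    exact patch_eq_self (four_pow_mul_mem_of_abs_sub_lt hx)
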